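/- Fix integers q > r ≥ 1. For every ε > 0 there exists N such that for every integer n ≥ N, the number of partitions of the collection of all q-element subsets of an n-element set into parts each of which is an (n, q, r)-Steiner system is at most ((1 + ε) · C(n−r, q−r) / e^(C(q,r)))^(C(n,q)), where C(a,b) denotes the binomial coefficient. -/

import Mathlib

/-!
A decomposition of the `q`-sets of `Fin n` into Steiner systems has exactly
`D = C(n - r, q - r)` parts, since the `q`-sets containing a fixed `r`-set lie in distinct parts
and meet every part. Enumerating the parts turns the decomposition into a colouring of the `q`-sets
with `D` colours whose colour classes are Steiner systems, and the decomposition is recovered from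
the colouring, so it suffices to bound the number of these *Steiner colourings*.

They are proper colourings of the graph `G` in which two distinct `q`-sets are adjacent when they
share at least `r` points. Fix such a colouring `f` and a vertex `e`, and let `K = C(q, r)`. For a
colour `c`, every `r`-subset of `e` lies in a unique `q`-set of colour `c`, and these `K` sets are
distinct neighbours of `e` unless one of them shares more than `r` points with `e`. The exceptional
colours number at most `b = C(q, r + 1) C(n - r - 1, q - r - 1) = O(D / n)`.

The counting is a random-order argument in the style of Radhakrishnan's proof of Brègman's theorem.
Give every vertex a label in `Fin m` and reveal `f` from the highest label to the lowest. Let `A e f`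
be the set of colours not ruled out for `e` by neighbours of `e` with a strictly higher label.
* For a fixed labelling, `∑ f, ∏ e, 1 / |A e f| ≤ 1` (`sum_prod_inv_card_le_one`), hence by Jensen's
  inequality the average over `f` of `∑ e, log |A e f|` is at least the logarithm of the number
  of colourings.
* For uniformly random labels conditioned on `e` having the label `j`, a non-exceptional colour
  survives with probability at most `((j + 1) / m) ^ K`, hence by Jensen's inequality again the
  average of `log |A e f|` is at most `log (b + D ((j + 1) / m) ^ K)`.

Averaging over `j` gives `log_card_colorings_le`. As `n → ∞` we have `b / D → 0`, so for fixed `m`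
the bound per vertex is `log D + (K / m) log (m! / m ^ m) + o(1)`, and
`log (m! / m ^ m) / m → -1` as `m → ∞`. Working with `m` discrete labels replaces the usual integral
`∫ log (x ^ K) dx = -K` by a finite sum.
-/

/-- An `(n, q, r)`-Steiner system: a collection of `q`-element subsets of `Fin n` such that
every `r`-element subset of `Fin n` is contained in exactly one member of the collection. -/
def IsSteinerSystem (n q r : ℕ) (S : Finset (Finset (Fin n))) : Prop :=
  (∀ e ∈ S, e.card = q) ∧
  (∀ t : Finset (Fin n), t.card = r → ∃! e, e ∈ S ∧ t ⊆ e)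

/-- A partition of the collection of all `q`-element subsets of `Fin n` into parts,
each of which is an `(n, q, r)`-Steiner system: every part is a Steiner system, and
every `q`-element subset belongs to exactly one part. -/
def IsSteinerDecomposition (n q r : ℕ) (P : Finset (Finset (Finset (Fin n)))) : Prop :=
  (∀ S ∈ P, IsSteinerSystem n q r S) ∧
  (∀ e : Finset (Fin n), e.card = q → ∃! S, S ∈ P ∧ e ∈ S)

/-! ### Counting proper colourings by revealing them in a random order -/

/-- Jensen's inequality for the logarithm: if the average of the `x i` is at most `a`, then the
average of the `log (x i)` is at most `log a`. -/
theorem sum_log_le {ι : Type*} (s : Finset ι) (x : ι → ℝ) (a : ℝ) (ha : 0 < a)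
    (hx : ∀ i ∈ s, 0 < x i) (h : ∑ i ∈ s, x i ≤ s.card * a) :
    ∑ i ∈ s, Real.log (x i) ≤ s.card * Real.log a := by
  have h1 : ∀ i ∈ s, Real.log (x i) ≤ Real.log a + (x i / a - 1) := by
    intro i hi
    have h2 := Real.log_le_sub_one_of_pos (div_pos (hx i hi) ha)
    rw [Real.log_div (hx i hi).ne' ha.ne'] at h2
    linarith
  have h3 : (∑ i ∈ s, x i) / a ≤ s.card := by rwa [div_le_iff₀ ha]
  calc ∑ i ∈ s, Real.log (x i) ≤ ∑ i ∈ s, (Real.log a + (x i / a - 1)) := Finset.sum_le_sum h1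
    _ = s.card * Real.log a + ((∑ i ∈ s, x i) / a - s.card) := by
        simp [Finset.sum_add_distrib, Finset.sum_sub_distrib, Finset.sum_div]
    _ ≤ _ := by linarith

/-- A Kraft-type inequality. Colours are chosen for the vertices in decreasing order of `lam`, and the
set `A e f` of colours allowed at `e` depends only on the values of `f` at vertices with a strictly
larger label. Choosing each colour uniformly from the allowed ones produces `f` with probability
`∏ e, 1 / |A e f|`, so these numbers sum to at most `1`. -/
theorem sum_prod_inv_card_le_one {V C L : Type*} [Fintype V] [DecidableEq V] [Fintype C]
    [DecidableEq C] [LinearOrder L] (lam : V → L) (A : V → (V → C) → Finset C)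
    (hA : ∀ e f g, (∀ e', lam e < lam e' → f e' = g e') → A e f = A e g)
    (S : Finset (V → C)) (hS : ∀ f ∈ S, ∀ e, f e ∈ A e f) :
    ∑ f ∈ S, ∏ e, ((A e f).card : ℝ)⁻¹ ≤ 1 := by
  classical
  rcases S.eq_empty_or_nonempty with rfl | ⟨f₀, -⟩
  · simp
  -- Partial colourings of `s`, encoded as functions that agree with `f₀` outside `s`.
  let F : Finset V → Finset (V → C) := fun s =>
    Finset.univ.filter fun f => (∀ e ∉ s, f e = f₀ e) ∧ ∀ e ∈ s, f e ∈ A e f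
  have hF : ∀ s f, f ∈ F s ↔ (∀ e ∉ s, f e = f₀ e) ∧ ∀ e ∈ s, f e ∈ A e f := by
    intro s f; simp [F]
  have key : ∀ s : Finset V, ∑ f ∈ F s, ∏ e ∈ s, ((A e f).card : ℝ)⁻¹ ≤ 1 := by
    intro s
    induction s using Finset.induction_on_min_value lam with
    | empty =>
      simp only [Finset.prod_empty, Finset.sum_const, nsmul_eq_mul, mul_one]
      have : (F ∅).card ≤ 1 := by
        rw [Finset.card_le_one]
        intro f hf g hg
        rw [hF] at hf hg
        funext e
        rw [hf.1 e (by simp), hg.1 e (by simp)]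
      exact_mod_cast this
    | insert a s ha hmin ih =>
      -- `a` has the smallest label in `insert a s`, so its colour affects none of these `A e`.
      have hupd : ∀ (f : V → C) (x : C), ∀ e ∈ insert a s,
          A e (Function.update f a x) = A e f := by
        intro f x e he
        apply hA
        intro e' he'
        have : e' ≠ a := by
          rintro rfl
          rcases Finset.mem_insert.1 he with rfl | he
          · exact lt_irrefl _ he'
          · exact absurd he' (not_lt.2 (hmin _ he))
        simp [this]
      have hmaps : ∀ f ∈ F (insert a s), Function.update f a (f₀ a) ∈ F s := by
        intro f hf
        rw [hF] at hf ⊢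
        refine ⟨fun e he => ?_, fun e he => ?_⟩
        · by_cases hea : e = a
          · subst hea; simp
          · simp [hea, hf.1 e (by simp [hea, he])]
        · have hea : e ≠ a := by rintro rfl; exact ha he
          rw [hupd f _ e (Finset.mem_insert_of_mem he)]
          simpa [hea] using hf.2 e (Finset.mem_insert_of_mem he)
      rw [← Finset.sum_fiberwise_of_maps_to hmaps]
      refine le_trans (Finset.sum_le_sum fun g hg => ?_) ih
      have h1 : ∀ f ∈ (F (insert a s)).filter (fun f => Function.update f a (f₀ a) = g),
          ∏ e ∈ insert a s, ((A e f).card : ℝ)⁻¹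
            = ((A a g).card : ℝ)⁻¹ * ∏ e ∈ s, ((A e g).card : ℝ)⁻¹ := by
        intro f hf
        obtain rfl := (Finset.mem_filter.1 hf).2
        rw [Finset.prod_insert ha, hupd f _ a (by simp)]
        congr 1
        refine Finset.prod_congr rfl fun e he => ?_
        rw [hupd f _ e (by simp [he])]
      rw [Finset.sum_congr rfl h1, Finset.sum_const, nsmul_eq_mul]
      have h2 : ((F (insert a s)).filter
          (fun f => Function.update f a (f₀ a) = g)).card ≤ (A a g).card := by
        apply Finset.card_le_card_of_injOn (fun f => f a)
        · intro f hf
          obtain ⟨hfF, rfl⟩ := Finset.mem_filter.1 (Finset.mem_coe.1 hf)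
          rw [hupd f _ a (Finset.mem_insert_self a s)]
          exact ((hF (insert a s) f).1 hfF).2 a (Finset.mem_insert_self a s)
        · intro f hf f' hf' haa
          have h3 := (Finset.mem_filter.1 (Finset.mem_coe.1 hf)).2
          have h4 := (Finset.mem_filter.1 (Finset.mem_coe.1 hf')).2
          funext e
          by_cases hea : e = a
          · subst hea; exact haa
          · have := congrFun (h3.trans h4.symm) e
            simpa [hea] using this
      have h5 : 0 ≤ ∏ e ∈ s, ((A e g).card : ℝ)⁻¹ := Finset.prod_nonneg fun _ _ => by positivity
      rw [← mul_assoc]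
      refine mul_le_of_le_one_left h5 ?_
      rw [← div_eq_mul_inv]
      exact div_le_one_of_le₀ (by exact_mod_cast h2) (by positivity)
  refine le_trans (Finset.sum_le_sum_of_subset_of_nonneg (fun f hf => ?_) fun _ _ _ =>
    Finset.prod_nonneg fun _ _ => by positivity) (key Finset.univ)
  exact (hF _ _).2 ⟨by simp, fun e _ => hS f hf e⟩

/-- Under a uniformly random labelling conditioned on `l e = j`, the vertices of `T`, which does not
contain `e`, all have labels at
most `j` with probability `((j + 1) / m) ^ |T|`. -/
theorem card_labels_le_eq {V : Type*} [Fintype V] [DecidableEq V] {m : ℕ} (e : V) (j : Fin m)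
    (T : Finset V) (heT : e ∉ T) :
    ((Finset.univ.filter fun l : V → Fin m => l e = j ∧ ∀ v ∈ T, l v ≤ j).card : ℝ)
      = (Finset.univ.filter fun l : V → Fin m => l e = j).card *
        (((j : ℕ) + 1 : ℝ) / m) ^ T.card := by
  have hm : (m : ℝ) ≠ 0 := by have := j.pos; positivity
  have h1 : (Finset.univ.filter fun l : V → Fin m => l e = j ∧ ∀ v ∈ T, l v ≤ j)
      = Fintype.piFinset fun v => if v = e then {j} else if v ∈ T then Finset.Iic j
        else Finset.univ := by
    ext l
    simp only [Finset.mem_filter, Finset.mem_univ, true_and, Fintype.mem_piFinset]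
    constructor
    · rintro ⟨h, h'⟩ v
      split_ifs with h1 h2
      · subst h1; simpa using h
      · simpa using h' v h2
      · simp
    · intro h
      refine ⟨by simpa using h e, fun v hv => ?_⟩
      have hve : v ≠ e := by rintro rfl; exact heT hv
      simpa [hve, hv] using h v
  have h2 : (Finset.univ.filter fun l : V → Fin m => l e = j)
      = Fintype.piFinset fun v => if v = e then {j} else Finset.univ := by
    ext l
    simp only [Finset.mem_filter, Finset.mem_univ, true_and, Fintype.mem_piFinset]
    constructor
    · intro h v
      split_ifs with h1
      · subst h1; simpa using h
      · simp
    · intro h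
      simpa using h e
  have h3 : (((j : ℕ) + 1 : ℝ) / m) ^ T.card
      = ∏ v, if v ∈ T then (((j : ℕ) + 1 : ℝ) / m) else 1 := by
    rw [Finset.prod_ite_mem, Finset.univ_inter, Finset.prod_const]
  rw [h1, h2, h3, Fintype.card_piFinset, Fintype.card_piFinset, Nat.cast_prod, Nat.cast_prod,
    ← Finset.prod_mul_distrib]
  refine Finset.prod_congr rfl fun v _ => ?_
  by_cases hve : v = e
  · subst hve; simp [heT]
  · by_cases hv : v ∈ T
    · simp [hve, hv]; field_simp
    · simp [hve, hv]

theorem card_labels_eq {V : Type*} [Fintype V] [DecidableEq V] {m : ℕ} (e : V) (j : Fin m) :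
    ((Finset.univ.filter fun l : V → Fin m => l e = j).card : ℝ) * m
      = Fintype.card (V → Fin m) := by
  have h2 : (Finset.univ.filter fun l : V → Fin m => l e = j)
      = Fintype.piFinset fun v => if v = e then {j} else Finset.univ := by
    ext l
    simp only [Finset.mem_filter, Finset.mem_univ, true_and, Fintype.mem_piFinset]
    constructor
    · intro h v
      split_ifs with h1
      · subst h1; simpa using h
      · simp
    · intro h
      simpa using h e
  rw [h2, Fintype.card_piFinset]
  have : ∀ v, (if v = e then ({j} : Finset (Fin m)) else Finset.univ).card
      = if v = e then 1 else m := by intro v; split_ifs <;> simp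
  simp only [this]
  rw [Fintype.card_fun, Fintype.card_fin, ← Finset.mul_prod_erase _ _ (Finset.mem_univ e)]
  have : ∏ x ∈ Finset.univ.erase e, (if x = e then 1 else m) = m ^ (Fintype.card V - 1) := by
    rw [Finset.prod_congr rfl (g := fun _ => m)]
    · simp
    · intro x hx; simp [Finset.ne_of_mem_erase hx]
  rw [this]
  have hV : 0 < Fintype.card V := Fintype.card_pos_iff.2 ⟨e⟩
  obtain ⟨k, hk⟩ := Nat.exists_eq_succ_of_ne_zero hV.ne'
  rw [hk]; simp [pow_succ]

/-- Bound on a family `S` of proper colourings of a graph `G` in which, for every `f ∈ S` and every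
vertex `e`, all colours outside a set `B f e` of at most `b` exceptional ones occur on at least `K`
neighbours of `e`. The number `m` of labels used in the random order is arbitrary. -/
theorem log_card_colorings_le {V C : Type*} [Fintype V] [DecidableEq V] [Fintype C]
    [DecidableEq C] [Nonempty C] (G : V → V → Prop) (hG : ∀ e, ¬ G e e)
    (K b m : ℕ) (hm : 0 < m) (S : Finset (V → C)) (hSne : S.Nonempty)
    (hproper : ∀ f ∈ S, ∀ e e', G e e' → f e ≠ f e')
    (B : (V → C) → V → Finset C) (hB : ∀ f ∈ S, ∀ e, (B f e).card ≤ b)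
    (hgood : ∀ f ∈ S, ∀ e, ∀ c ∉ B f e, ∃ T : Finset V, T.card = K ∧ ∀ v ∈ T, G e v ∧ f v = c) :
    Real.log S.card ≤ Fintype.card V * ((∑ j : Fin m,
      Real.log (b + Fintype.card C * (((j : ℕ) + 1 : ℝ) / m) ^ K)) / m) := by
  classical
  -- The colours not ruled out for `e` by neighbours of larger label.
  let A : (V → Fin m) → V → (V → C) → Finset C := fun l e f =>
    Finset.univ.filter fun c => ∀ e', l e < l e' → G e e' → f e' ≠ c
  have hAmem : ∀ l e f c, c ∈ A l e f ↔ ∀ e', l e < l e' → G e e' → f e' ≠ c := by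
    intro l e f c; simp [A]
  have hSA : ∀ l, ∀ f ∈ S, ∀ e, f e ∈ A l e f := by
    intro l f hf e
    rw [hAmem]
    intro e' _ h
    exact (hproper f hf e e' h).symm
  have hApos : ∀ l, ∀ f ∈ S, ∀ e, (0 : ℝ) < (A l e f).card := by
    intro l f hf e
    exact_mod_cast Finset.card_pos.2 ⟨_, hSA l f hf e⟩
  have hScard : (0 : ℝ) < S.card := by exact_mod_cast hSne.card_pos
  have hm' : (0 : ℝ) < m := by exact_mod_cast hm
  have hC : (0 : ℝ) < Fintype.card C := by exact_mod_cast Fintype.card_pos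
  -- Jensen over `f ∈ S`, for a fixed labelling.
  have h1 : ∀ l : V → Fin m, (S.card : ℝ) * Real.log S.card
      ≤ ∑ f ∈ S, ∑ e, Real.log (A l e f).card := by
    intro l
    have hk := sum_prod_inv_card_le_one l (A l) (by
      intro e f g h
      ext c
      rw [hAmem, hAmem]
      refine forall_congr' fun e' => forall_congr' fun he' => ?_
      rw [h e' he']) S (hSA l)
    have := sum_log_le S (fun f => ∏ e, ((A l e f).card : ℝ)⁻¹) (S.card : ℝ)⁻¹ (by positivity)
      (fun f hf => Finset.prod_pos fun e _ => inv_pos.2 (hApos l f hf e))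
      (by rwa [mul_inv_cancel₀ hScard.ne'])
    rw [Real.log_inv] at this
    have h2 : ∑ f ∈ S, Real.log (∏ e, ((A l e f).card : ℝ)⁻¹)
        = - ∑ f ∈ S, ∑ e, Real.log (A l e f).card := by
      rw [← Finset.sum_neg_distrib]
      refine Finset.sum_congr rfl fun f hf => ?_
      rw [Real.log_prod (fun e _ => (inv_pos.2 (hApos l f hf e)).ne')]
      simp [Real.log_inv]
    rw [h2] at this
    linarith
  set a : Fin m → ℝ := fun j => b + Fintype.card C * (((j : ℕ) + 1 : ℝ) / m) ^ K with ha
  have hapos : ∀ j, 0 < a j := fun j => by positivity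
  let Λ : V → Fin m → Finset (V → Fin m) := fun e j => Finset.univ.filter fun l => l e = j
  -- The expected number of surviving colours, given that `e` has the label `j`.
  have h2 : ∀ f ∈ S, ∀ e j, ∑ l ∈ Λ e j, ((A l e f).card : ℝ) ≤ (Λ e j).card * a j := by
    intro f hf e j
    -- Double count the pairs of a labelling and a surviving colour.
    have e1 : ∑ l ∈ Λ e j, ((A l e f).card : ℝ)
        = ∑ c, (((Λ e j).filter fun l => c ∈ A l e f).card : ℝ) := by
      have := Finset.sum_card_bipartiteAbove_eq_sum_card_bipartiteBelow
        (s := Λ e j) (t := Finset.univ) (fun l c => c ∈ A l e f)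
      simp only [Finset.bipartiteAbove, Finset.bipartiteBelow] at this
      have h3 : ∀ l, (Finset.univ.filter fun c => c ∈ A l e f) = A l e f := by
        intro l; ext; simp
      simp only [h3] at this
      exact_mod_cast this
    have e2 : ∀ c, (((Λ e j).filter fun l => c ∈ A l e f).card : ℝ)
        ≤ (Λ e j).card * ((if c ∈ B f e then 1 else 0) + (((j : ℕ) + 1 : ℝ) / m) ^ K) := by
      intro c
      by_cases hc : c ∈ B f e
      · rw [if_pos hc]
        have h3 : (((Λ e j).filter fun l => c ∈ A l e f).card : ℝ) ≤ (Λ e j).card := by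
          exact_mod_cast Finset.card_filter_le _ _
        have h4 : (0 : ℝ) ≤ (((j : ℕ) + 1 : ℝ) / m) ^ K := by positivity
        nlinarith [(Nat.cast_nonneg (Λ e j).card : (0 : ℝ) ≤ _)]
      · rw [if_neg hc, zero_add]
        obtain ⟨T, hT, hTG⟩ := hgood f hf e c hc
        have heT : e ∉ T := fun h => hG e (hTG e h).1
        rw [← hT, ← card_labels_le_eq e j T heT]
        have : (Λ e j).filter (fun l => c ∈ A l e f) ⊆
            Finset.univ.filter fun l : V → Fin m => l e = j ∧ ∀ v ∈ T, l v ≤ j := by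
          intro l hl
          obtain ⟨hl, hcA⟩ := Finset.mem_filter.1 hl
          have hl : l e = j := by simpa [Λ] using hl
          simp only [Finset.mem_filter, Finset.mem_univ, true_and]
          refine ⟨hl, fun v hv => ?_⟩
          by_contra hlt
          rw [hAmem] at hcA
          exact hcA v (by rw [hl]; exact not_le.1 hlt) (hTG v hv).1 (hTG v hv).2
        exact_mod_cast Finset.card_le_card this
    rw [e1]
    refine (Finset.sum_le_sum fun c _ => e2 c).trans ?_
    rw [← Finset.mul_sum, Finset.sum_add_distrib]
    refine mul_le_mul_of_nonneg_left ?_ (Nat.cast_nonneg _)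
    have h3 : ((B f e).card : ℝ) ≤ b := by exact_mod_cast hB f hf e
    simp [ha, h3]
  -- Jensen over the labellings with `l e = j`, followed by summation over `j`.
  have h3 : ∀ f ∈ S, ∀ e, ∑ l : V → Fin m, Real.log (A l e f).card
      ≤ Fintype.card (V → Fin m) * ((∑ j, Real.log (a j)) / m) := by
    intro f hf e
    rw [← Finset.sum_fiberwise_of_maps_to (s := Finset.univ) (t := Finset.univ)
      (g := fun l : V → Fin m => l e) (by simp)]
    calc _ ≤ ∑ j, ((Λ e j).card : ℝ) * Real.log (a j) := Finset.sum_le_sum fun j _ =>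
          sum_log_le (Λ e j) _ (a j) (hapos j) (fun l _ => hApos l f hf e) (h2 f hf e j)
      _ = _ := by
          rw [Finset.sum_div, Finset.mul_sum]
          refine Finset.sum_congr rfl fun j _ => ?_
          rw [← card_labels_eq e j]
          field_simp
          exact mul_comm _ _
  have hL : (0 : ℝ) < Fintype.card (V → Fin m) := by
    have : Nonempty (Fin m) := ⟨⟨0, hm⟩⟩
    exact_mod_cast Fintype.card_pos
  have h4 : (Fintype.card (V → Fin m) : ℝ) * (S.card * Real.log S.card) ≤
      Fintype.card (V → Fin m) * (S.card * (Fintype.card V * ((∑ j, Real.log (a j)) / m))) := by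
    calc _ = ∑ l : V → Fin m, (S.card : ℝ) * Real.log S.card := by simp
      _ ≤ ∑ l : V → Fin m, ∑ f ∈ S, ∑ e, Real.log (A l e f).card :=
          Finset.sum_le_sum fun l _ => h1 l
      _ = ∑ f ∈ S, ∑ e, ∑ l : V → Fin m, Real.log (A l e f).card := by
          rw [Finset.sum_comm]
          exact Finset.sum_congr rfl fun f _ => Finset.sum_comm
      _ ≤ ∑ f ∈ S, ∑ e : V, Fintype.card (V → Fin m) * ((∑ j, Real.log (a j)) / m) :=
          Finset.sum_le_sum fun f hf => Finset.sum_le_sum fun e _ => h3 f hf e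
      _ = _ := by
          simp only [Finset.sum_const, nsmul_eq_mul, Finset.card_univ]; ring
  exact le_of_mul_le_mul_left (le_of_mul_le_mul_left h4 hL) hScard

/-! ### Steiner colourings -/

/-- A colouring of the `q`-subsets of `Fin n` with `D` colours, each of whose colour classes is an
`(n, q, r)`-Steiner system. -/
def IsSteinerColoring (n q r D : ℕ) (f : {e : Finset (Fin n) // e.card = q} → Fin D) : Prop :=
  ∀ t : Finset (Fin n), t.card = r → ∀ c : Fin D, ∃! e, f e = c ∧ t ⊆ e.1

theorem card_supersets (n q : ℕ) (t : Finset (Fin n)) (ht : t.card ≤ q) :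
    ((Finset.univ : Finset {e : Finset (Fin n) // e.card = q}).filter fun e => t ⊆ e.1).card
      = (n - t.card).choose (q - t.card) := by
  have h := Finset.card_filter_powersetCard_subset t Finset.univ q (Finset.subset_univ t) ht
  rw [Finset.card_fin] at h
  rw [← h, ← Finset.card_map (Function.Embedding.subtype _)]
  congr 1
  ext e
  simp [Finset.mem_powersetCard, and_comm]

/-- A decomposition has `C(n - r, q - r)` parts: fix an `r`-set `t`; sending a `q`-set containing `t`
to its part is a bijection, because every part has exactly one member containing `t`. -/
theorem card_decomposition {n q r : ℕ} (hrq : r < q) (hn : q ≤ n)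
    {P : Finset (Finset (Finset (Fin n)))} (hP : IsSteinerDecomposition n q r P) :
    P.card = (n - r).choose (q - r) := by
  obtain ⟨t, -, ht⟩ := Finset.exists_subset_card_eq
    (s := (Finset.univ : Finset (Fin n))) (n := r) (by simp; omega)
  rw [← ht, ← card_supersets n q t (by omega)]
  symm
  choose part hpart using fun e : {e : Finset (Fin n) // e.card = q} => hP.2 e.1 e.2
  refine Finset.card_bij (fun e _ => part e) (fun e _ => (hpart e).1.1) ?_ ?_
  · intro e he e' he' h
    simp only [Finset.mem_filter, Finset.mem_univ, true_and] at he he'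
    obtain ⟨x, -, hx⟩ := (hP.1 _ (hpart e).1.1).2 t ht
    have h' := (hpart e').1.2
    rw [← show part e = part e' from h] at h'
    exact Subtype.ext ((hx _ ⟨(hpart e).1.2, he⟩).trans (hx _ ⟨h', he'⟩).symm)
  · intro S hS
    obtain ⟨x, hx, -⟩ := (hP.1 S hS).2 t ht
    refine ⟨⟨x, (hP.1 S hS).1 x hx.1⟩, by simpa using hx.2, ?_⟩
    exact ((hpart ⟨x, (hP.1 S hS).1 x hx.1⟩).2 S ⟨hS, hx.1⟩).symm

/-- Every decomposition is the set of colour classes of some Steiner colouring. -/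
theorem exists_coloring {n q r : ℕ} (hrq : r < q) (hn : q ≤ n)
    {P : Finset (Finset (Finset (Fin n)))} (hP : IsSteinerDecomposition n q r P) :
    ∃ f : {e : Finset (Fin n) // e.card = q} → Fin ((n - r).choose (q - r)),
      IsSteinerColoring n q r _ f ∧ P = Finset.univ.image fun c =>
        (Finset.univ.filter fun e => f e = c).image Subtype.val := by
  choose part hpart using fun e : {e : Finset (Fin n) // e.card = q} => hP.2 e.1 e.2
  let φ := P.equivFinOfCardEq (card_decomposition hrq hn hP)
  have hpart_eq : ∀ S (hS : S ∈ P) e, φ ⟨part e, (hpart e).1.1⟩ = φ ⟨S, hS⟩ ↔ e.1 ∈ S := by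
    intro S hS e
    rw [φ.apply_eq_iff_eq, Subtype.mk.injEq]
    constructor
    · rintro rfl; exact (hpart e).1.2
    · intro h; exact ((hpart e).2 S ⟨hS, h⟩).symm
  have hclass : ∀ S (hS : S ∈ P), (Finset.univ.filter fun e =>
      φ ⟨part e, (hpart e).1.1⟩ = φ ⟨S, hS⟩).image Subtype.val = S := by
    intro S hS
    ext x
    simp only [hpart_eq, Finset.mem_image, Finset.mem_filter, Finset.mem_univ, true_and]
    constructor
    · rintro ⟨e, he, rfl⟩; exact he
    · intro hx; exact ⟨⟨x, (hP.1 S hS).1 x hx⟩, hx, rfl⟩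
  refine ⟨fun e => φ ⟨part e, (hpart e).1.1⟩, ?_, ?_⟩
  · intro t ht c
    obtain ⟨⟨S, hS⟩, rfl⟩ := φ.surjective c
    obtain ⟨x, hx, hux⟩ := (hP.1 S hS).2 t ht
    refine ⟨⟨x, (hP.1 S hS).1 x hx.1⟩, ⟨(hpart_eq S hS _).2 hx.1, hx.2⟩, ?_⟩
    rintro e ⟨he, hte⟩
    exact Subtype.ext (hux _ ⟨(hpart_eq S hS e).1 he, hte⟩)
  · ext S
    simp only [Finset.mem_image, Finset.mem_univ, true_and]
    constructor
    · intro hS; exact ⟨φ ⟨S, hS⟩, hclass S hS⟩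
    · rintro ⟨c, rfl⟩
      obtain ⟨⟨S, hS⟩, rfl⟩ := φ.surjective c
      rw [hclass S hS]; exact hS

/-- `log_card_colorings_le` applied to Steiner colourings, as proper colourings of the graph of
`q`-sets sharing at least `r` points. The colours exceptional for `e` are those of the `q`-sets,
`e` included, that share at least `r + 1` points with `e`. -/
theorem log_card_decompositions_le {n q r : ℕ} (hrq : r < q) (hn : q ≤ n) (m : ℕ) (hm : 0 < m)
    (hne : 0 < Nat.card {P : Finset (Finset (Finset (Fin n))) // IsSteinerDecomposition n q r P}) :
    Real.log (Nat.card {P : Finset (Finset (Finset (Fin n))) // IsSteinerDecomposition n q r P})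
      ≤ n.choose q * ((∑ j : Fin m, Real.log
        ((q.choose (r + 1) * (n - (r + 1)).choose (q - (r + 1)) : ℕ) + (n - r).choose (q - r) *
          (((j : ℕ) + 1 : ℝ) / m) ^ q.choose r)) / m) := by
  classical
  set D := (n - r).choose (q - r) with hD
  have hDpos : 0 < D := Nat.choose_pos (by omega)
  have : Nonempty (Fin D) := ⟨⟨0, hDpos⟩⟩
  let V := {e : Finset (Fin n) // e.card = q}
  let S : Finset (V → Fin D) := Finset.univ.filter (IsSteinerColoring n q r D)
  have hS : ∀ f, f ∈ S ↔ IsSteinerColoring n q r D f := by intro f; simp [S]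
  have hle : Nat.card {P : Finset (Finset (Finset (Fin n))) // IsSteinerDecomposition n q r P}
      ≤ S.card := by
    rw [Nat.card_eq_fintype_card, Fintype.card_subtype]
    refine (Finset.card_le_card (fun P hP => ?_)).trans (Finset.card_image_le (s := S)
      (f := fun f => Finset.univ.image fun c =>
        (Finset.univ.filter fun e => f e = c).image Subtype.val))
    obtain ⟨f, hf, hPf⟩ := exists_coloring hrq hn (Finset.mem_filter.1 hP).2
    exact Finset.mem_image.2 ⟨f, (hS f).2 hf, hPf.symm⟩
  have hVcard : Fintype.card V = n.choose q := by
    have h := card_supersets n q ∅ (by simp)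
    simpa only [Finset.empty_subset, Finset.filter_true, Finset.card_empty, Nat.sub_zero,
      Finset.card_univ] using h
  have hSne : S.Nonempty := Finset.card_pos.1 (hne.trans_le hle)
  have hmain := log_card_colorings_le (V := V) (C := Fin D)
    (fun e e' => e ≠ e' ∧ r ≤ (e.1 ∩ e'.1).card) (fun e h => h.1 rfl) (q.choose r)
    (q.choose (r + 1) * (n - (r + 1)).choose (q - (r + 1))) m hm S hSne
    (by
      rintro f hf e e' ⟨hee, hr⟩ h
      obtain ⟨t, hte, ht⟩ := Finset.exists_subset_card_eq hr
      obtain ⟨x, -, hx⟩ := (hS f).1 hf t ht (f e')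
      exact hee ((hx e ⟨h, hte.trans Finset.inter_subset_left⟩).trans
        (hx e' ⟨rfl, hte.trans Finset.inter_subset_right⟩).symm))
    (fun f e => (Finset.univ.filter fun e' : V => r + 1 ≤ (e.1 ∩ e'.1).card).image f)
    (by
      intro f _ e
      refine Finset.card_image_le.trans ?_
      have hsub : (Finset.univ.filter fun e' : V => r + 1 ≤ (e.1 ∩ e'.1).card) ⊆
          (e.1.powersetCard (r + 1)).biUnion fun u =>
            (Finset.univ : Finset V).filter fun e' => u ⊆ e'.1 := by
        intro e' he'
        obtain ⟨u, hu, huc⟩ := Finset.exists_subset_card_eq (Finset.mem_filter.1 he').2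
        simp only [Finset.mem_biUnion, Finset.mem_powersetCard, Finset.mem_filter,
          Finset.mem_univ, true_and]
        exact ⟨u, ⟨hu.trans Finset.inter_subset_left, huc⟩, hu.trans Finset.inter_subset_right⟩
      refine (Finset.card_le_card hsub).trans (Finset.card_biUnion_le.trans ?_)
      rw [Finset.sum_congr rfl (g := fun _ => (n - (r + 1)).choose (q - (r + 1)))]
      · rw [Finset.sum_const, Finset.card_powersetCard, e.2, smul_eq_mul]
      · intro u hu
        have huc := (Finset.mem_powersetCard.1 hu).2
        rw [card_supersets n q u (by omega), huc])
    (by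
      intro f hf e c hc
      have hc' : ∀ e' : V, f e' = c → (e.1 ∩ e'.1).card ≤ r := by
        intro e' he'
        by_contra hlt
        exact hc (Finset.mem_image.2 ⟨e', by simp; omega, he'⟩)
      have : Nonempty {e : Finset (Fin n) // e.card = q} := ⟨e⟩
      -- `g t` is the `q`-set of colour `c` containing the `r`-set `t`.
      choose! g hg using fun t (ht : t.card = r) => (hS f).1 hf t ht c
      refine ⟨(e.1.powersetCard r).image g, ?_, ?_⟩
      · rw [Finset.card_image_of_injOn, Finset.card_powersetCard, e.2]
        intro t ht t' ht' htt
        obtain ⟨hte, htc⟩ := Finset.mem_powersetCard.1 (Finset.mem_coe.1 ht)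
        obtain ⟨hte', htc'⟩ := Finset.mem_powersetCard.1 (Finset.mem_coe.1 ht')
        have h1 := (hg t htc).1
        have h2 := (hg t' htc').1
        rw [← show g t = g t' from htt] at h2
        have h3 := hc' _ h1.1
        -- `e ∩ g t` has at most `r` elements and contains both `r`-sets in question.
        have e1 := Finset.eq_of_subset_of_card_le (Finset.subset_inter hte h1.2) (by omega)
        have e2 := Finset.eq_of_subset_of_card_le (Finset.subset_inter hte' h2.2) (by omega)
        exact e1.trans e2.symm
      · intro v hv
        obtain ⟨t, ht, rfl⟩ := Finset.mem_image.1 hv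
        obtain ⟨hte, htc⟩ := Finset.mem_powersetCard.1 ht
        have h1 := (hg t htc).1
        refine ⟨⟨?_, ?_⟩, h1.1⟩
        · intro h
          have := hc' _ h1.1
          rw [← h, Finset.inter_self, e.2] at this
          omega
        · rw [← htc]
          exact Finset.card_le_card (Finset.subset_inter hte h1.2))
  rw [hVcard, Fintype.card_fin] at hmain
  exact (Real.log_le_log (by exact_mod_cast hne) (by exact_mod_cast hle)).trans hmain

/-! ### Asymptotics -/

/-- The elementary bound `log N! ≤ N log N - N + 1 + log N` for `N = n + 1`. -/
theorem log_factorial_le (n : ℕ) :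
    Real.log (n + 1).factorial ≤
      (n + 1 : ℕ) * Real.log (n + 1 : ℕ) - (n + 1 : ℕ) + 1 + Real.log (n + 1 : ℕ) := by
  induction n with
  | zero => simp
  | succ n ih =>
    have h1 : (0 : ℝ) < (n + 1 : ℕ) := by positivity
    have h2 : (0 : ℝ) < (n + 1 + 1 : ℕ) := by positivity
    have h := Real.log_le_sub_one_of_pos (div_pos h1 h2)
    rw [Real.log_div h1.ne' h2.ne'] at h
    have h3 : (n + 1 + 1 : ℕ) * (Real.log (n + 1 : ℕ) - Real.log (n + 1 + 1 : ℕ))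
        ≤ (n + 1 + 1 : ℕ) * (((n + 1 : ℕ) : ℝ) / (n + 1 + 1 : ℕ) - 1) :=
      mul_le_mul_of_nonneg_left h h2.le
    rw [mul_sub, mul_sub, mul_div_cancel₀ _ h2.ne'] at h3
    rw [Nat.factorial_succ, Nat.cast_mul, Real.log_mul h2.ne' (by positivity)]
    push_cast at *
    linarith

/-- The Riemann sums of `∫ x in 0..1, log (x ^ K) = -K` come arbitrarily close to `-K`. -/
theorem exists_grid (K : ℕ) (η : ℝ) (hη : 0 < η) : ∃ m : ℕ, 0 < m ∧
    (∑ j : Fin m, Real.log ((((j : ℕ) + 1 : ℝ) / m) ^ K)) / m < -K + η := by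
  have hlim : Filter.Tendsto (fun m : ℕ => (K : ℝ) * (-1 + (1 / (m : ℝ) + Real.log m / m)))
      Filter.atTop (nhds (K * (-1 + (0 + 0)))) := by
    have h1 : Filter.Tendsto (fun x : ℝ => Real.log x / x) Filter.atTop (nhds 0) :=
      Real.isLittleO_log_id_atTop.tendsto_div_nhds_zero
    exact ((tendsto_one_div_atTop_nhds_zero_nat.add
      (h1.comp tendsto_natCast_atTop_atTop)).const_add _).const_mul _
  obtain ⟨m, hm1, hm⟩ := ((hlim.eventually (gt_mem_nhds
    (show (K : ℝ) * (-1 + (0 + 0)) < -K + η by linarith))).and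
    (Filter.eventually_gt_atTop 0)).exists
  refine ⟨m, hm, lt_of_le_of_lt ?_ hm1⟩
  have hm' : (0 : ℝ) < m := by exact_mod_cast hm
  have hsum : ∑ j : Fin m, Real.log ((((j : ℕ) + 1 : ℝ) / m) ^ K)
      = K * (Real.log m.factorial - m * Real.log m) := by
    have h1 : ∀ j : Fin m, Real.log ((((j : ℕ) + 1 : ℝ) / m) ^ K)
        = K * (Real.log ((j : ℕ) + 1 : ℝ) - Real.log m) := by
      intro j
      rw [Real.log_pow, Real.log_div (by positivity) hm'.ne']
    rw [Finset.sum_congr rfl fun j _ => h1 j, ← Finset.mul_sum, Finset.sum_sub_distrib,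
      Fin.sum_univ_eq_sum_range (fun j : ℕ => Real.log (j + 1 : ℝ)) m,
      ← Finset.prod_range_add_one_eq_factorial, Nat.cast_prod,
      Real.log_prod (fun i _ => by positivity)]
    simp
  rw [hsum, mul_div_assoc]
  refine mul_le_mul_of_nonneg_left ?_ (Nat.cast_nonneg K)
  obtain ⟨k, rfl⟩ := Nat.exists_eq_succ_of_ne_zero hm.ne'
  have h := log_factorial_le k
  rw [div_le_iff₀ hm']
  have e : (-1 + (1 / ((k.succ : ℕ) : ℝ) + Real.log (k.succ : ℕ) / (k.succ : ℕ))) * (k.succ : ℕ)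
      = -(k.succ : ℕ) + 1 + Real.log (k.succ : ℕ) := by
    field_simp
    ring
  rw [e]
  have : (k.succ).factorial = (k + 1).factorial := rfl
  rw [this]
  simp only [Nat.succ_eq_add_one] at *
  linarith

theorem steiner_decompositions_upper_bound :
    ∀ q r : ℕ, 1 ≤ r → r < q → ∀ ε : ℝ, 0 < ε → ∃ N : ℕ, ∀ n : ℕ, N ≤ n →
      (Nat.card {P : Finset (Finset (Finset (Fin n))) //
          IsSteinerDecomposition n q r P} : ℝ) ≤
        ((1 + ε) * ((n - r).choose (q - r)) / Real.exp (q.choose r)) ^ (n.choose q) := by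
  intro q r _ hrq ε hε
  set K := q.choose r with hK
  obtain ⟨m, hm, hgrid⟩ := exists_grid K (Real.log (1 + ε)) (Real.log_pos (by linarith))
  have hm' : (0 : ℝ) < m := by exact_mod_cast hm
  -- `F` is the bound per vertex after subtracting `log D`, as a function of `δ = b / D`.
  let F : ℝ → ℝ := fun δ => (∑ j : Fin m, Real.log (δ + (((j : ℕ) + 1 : ℝ) / m) ^ K)) / m
  have hF : ContinuousAt F 0 := by
    refine ContinuousAt.div_const (tendsto_finsetSum _ fun j _ => ?_) _
    refine ContinuousAt.log (by fun_prop) ?_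
    have : 0 < (((j : ℕ) + 1 : ℝ) / m) ^ K := by positivity
    simpa using this.ne'
  let δ : ℕ → ℝ := fun n => (q.choose (r + 1) * (q - r : ℕ) : ℝ) / (n - r : ℕ)
  have hδ : Filter.Tendsto δ Filter.atTop (nhds 0) :=
    (tendsto_const_div_atTop_nhds_zero_nat _).comp (Filter.tendsto_sub_atTop_nat r)
  have hev : ∀ᶠ n in Filter.atTop, F (δ n) < -K + Real.log (1 + ε) := by
    refine (hF.tendsto.comp hδ).eventually (gt_mem_nhds ?_)
    simpa [F] using hgrid
  obtain ⟨N, hN⟩ := Filter.eventually_atTop.1 (hev.and (Filter.eventually_ge_atTop q))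
  refine ⟨N, fun n hn => ?_⟩
  obtain ⟨hFn, hqn⟩ := hN n hn
  have hD : 0 < (n - r).choose (q - r) := Nat.choose_pos (by omega)
  have hD' : (0 : ℝ) < (n - r).choose (q - r) := by exact_mod_cast hD
  rcases Nat.eq_zero_or_pos
    (Nat.card {P : Finset (Finset (Finset (Fin n))) // IsSteinerDecomposition n q r P})
    with h0 | hpos
  · rw [h0, Nat.cast_zero]; positivity
  have hb : ((q.choose (r + 1) * (n - (r + 1)).choose (q - (r + 1)) : ℕ) : ℝ)
      = (n - r).choose (q - r) * δ n := by
    have h1 := Nat.add_one_mul_choose_eq (n - (r + 1)) (q - (r + 1))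
    rw [show n - (r + 1) + 1 = n - r by omega, show q - (r + 1) + 1 = q - r by omega] at h1
    have h2 : ((n - r : ℕ) : ℝ) * ((n - (r + 1)).choose (q - (r + 1)) : ℕ)
        = (n - r).choose (q - r) * (q - r : ℕ) := by exact_mod_cast h1
    have h3 : ((n - r : ℕ) : ℝ) ≠ 0 := by
      have : n - r ≠ 0 := by omega
      exact_mod_cast this
    simp only [δ]
    rw [Nat.cast_mul, mul_div_assoc', eq_div_iff h3]
    linear_combination (q.choose (r + 1) : ℝ) * h2
  have hlog := log_card_decompositions_le hrq hqn m hm hpos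
  have hδ0 : 0 ≤ δ n := div_nonneg (by positivity) (Nat.cast_nonneg _)
  have hsum : (∑ j : Fin m, Real.log
        ((q.choose (r + 1) * (n - (r + 1)).choose (q - (r + 1)) : ℕ) + (n - r).choose (q - r) *
          (((j : ℕ) + 1 : ℝ) / m) ^ q.choose r)) / m
      = Real.log ((n - r).choose (q - r)) + F (δ n) := by
    have h1 : ∀ j : Fin m, Real.log
        ((q.choose (r + 1) * (n - (r + 1)).choose (q - (r + 1)) : ℕ) + (n - r).choose (q - r) *
          (((j : ℕ) + 1 : ℝ) / m) ^ q.choose r)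
        = Real.log ((n - r).choose (q - r)) + Real.log (δ n + (((j : ℕ) + 1 : ℝ) / m) ^ K) := by
      intro j
      rw [hb, ← mul_add, Real.log_mul hD'.ne' (by positivity)]
    rw [Finset.sum_congr rfl fun j _ => h1 j, Finset.sum_add_distrib, add_div]
    simp only [F, Finset.sum_const, Finset.card_univ, Fintype.card_fin, nsmul_eq_mul]
    rw [mul_div_cancel_left₀ _ hm'.ne']
  rw [hsum] at hlog
  have hbase : 0 < (1 + ε) * ((n - r).choose (q - r)) / Real.exp K := by positivity
  rw [← Real.log_le_log_iff (by exact_mod_cast hpos) (by positivity), Real.log_pow,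
    Real.log_div (by positivity) (Real.exp_pos _).ne', Real.log_mul (by positivity) hD'.ne',
    Real.log_exp]
  refine hlog.trans (mul_le_mul_of_nonneg_left ?_ (Nat.cast_nonneg _))
  linarith
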